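/- arXiv:1608.07825 — 2 statements merged into one kernel-verified Lean document; each statement's English description precedes it below -/
import Mathlib

section
/- Fix a real number d' > 0 and let δ = (r, c, s) ∈ ℝ³ with r > 0, c > 0, s > 0 and d'c² < rs. Then the set I_δ = { k(b, w) : b ∈ ℝ, w > 0, Z_{(b,w)}(δ) is real and Z_{(b,w)}(δ) ≤ 0 } is exactly the half-open line segment { (1−t)·Pr(δ) + t·pt_δ : 0 ≤ t < 1 }, where Pr(δ) = (c/s, r/s) and pt_δ = (r/(d'c), r²/(d'c²)) is the intersection point of the parabola y = d'x² with the line through the origin and Pr(δ). (Lemma 2.3 of the paper: the locus where the central charge of a root δ lies in ℝ_{≤0} is the segment between Pr(δ) and pt_δ.) -/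
/-!
The imaginary part of `Z_{(b,w)}(δ)` vanishes only for `b = c / r`, and then the real part is
nonpositive if and only if `N := d (b² + w²)` is at most `s / r`. With this `b` fixed,
`k(b, w) = N⁻¹ • (b, 1)` moves along a line through the origin, and `N` sweeps out `(d b², ∞)` as
`w` runs over the positive reals. So `N⁻¹` sweeps out `[r / s, (d b²)⁻¹)`, whose endpoints are the
parameters of `Pr(δ)` and of the second intersection of the line with the parabola `y = d x²`.
-/

open Set

section HalfOpenSegmentRing

variable {𝕜 E F : Type*} [Ring 𝕜] [PartialOrder 𝕜] [AddCommMonoid E] [Module 𝕜 E]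
  [AddCommMonoid F] [Module 𝕜 F]

variable (𝕜) in
/-- The line segment from `p` to `q` with `p` included and the parameter value of `q` excluded;
the half-open companion of `segment` and `openSegment`. -/
def halfOpenSegment (p q : E) : Set E :=
  {x | ∃ t : 𝕜, 0 ≤ t ∧ t < 1 ∧ x = (1 - t) • p + t • q}

theorem halfOpenSegment_eq_image (p q : E) :
    halfOpenSegment 𝕜 p q = (fun t : 𝕜 ↦ (1 - t) • p + t • q) '' Ico 0 1 := by
  ext x
  simp only [halfOpenSegment, mem_ofPred_eq, mem_image, mem_Ico, and_assoc, eq_comm]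

theorem image_halfOpenSegment (f : E →ₗ[𝕜] F) (p q : E) :
    f '' halfOpenSegment 𝕜 p q = halfOpenSegment 𝕜 (f p) (f q) := by
  simp only [halfOpenSegment_eq_image, image_image, map_add, map_smul]

end HalfOpenSegmentRing

section HalfOpenSegmentField

variable {𝕜 E : Type*} [Field 𝕜] [LinearOrder 𝕜] [IsStrictOrderedRing 𝕜] [AddCommMonoid E]
  [Module 𝕜 E]

theorem halfOpenSegment_eq_Ico {x y : 𝕜} (hxy : x < y) :
    halfOpenSegment 𝕜 x y = Ico x y := by
  rw [halfOpenSegment_eq_image]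
  convert! image_affine_Ico (sub_pos.mpr hxy) x 0 1 using 2
  · simp only [smul_eq_mul]
    ring
  all_goals ring

theorem image_smul_Ico {x y : 𝕜} (hxy : x < y) (v : E) :
    (fun a : 𝕜 ↦ a • v) '' Ico x y = halfOpenSegment 𝕜 (x • v) (y • v) := by
  rw [← halfOpenSegment_eq_Ico hxy]
  exact image_halfOpenSegment (LinearMap.toSpanSingleton 𝕜 E v) x y

end HalfOpenSegmentField

theorem image_inv_Ioc₀ {𝕜 : Type*} [Field 𝕜] [LinearOrder 𝕜] [IsStrictOrderedRing 𝕜] {x y : 𝕜}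
    (hx : 0 < x) (hy : 0 < y) : (fun a : 𝕜 ↦ a⁻¹) '' Ioc x y = Ico y⁻¹ x⁻¹ := by
  ext a
  rw [image_inv_eq_inv, mem_inv, mem_Ioc, mem_Ico]
  constructor
  · rintro ⟨hxa, hay⟩
    have ha : 0 < a := inv_pos.mp (hx.trans hxa)
    exact ⟨inv_le_of_inv_le₀ ha hay, (lt_inv_comm₀ hx ha).mp hxa⟩
  · rintro ⟨hya, hax⟩
    have ha : 0 < a := (inv_pos.mpr hy).trans_le hya
    exact ⟨(lt_inv_comm₀ ha hx).mp hax, inv_le_of_inv_le₀ hy hya⟩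

theorem image_mul_sq_add_sq_Ioi {d : ℝ} (hd : 0 < d) (b : ℝ) :
    (fun w ↦ d * (b ^ 2 + w ^ 2)) '' Ioi 0 = Ioi (d * b ^ 2) := by
  ext N
  constructor
  · rintro ⟨w, hw : 0 < w, rfl⟩
    exact mul_lt_mul_of_pos_left (lt_add_of_pos_right _ (pow_pos hw 2)) hd
  · intro hN
    have hpos : 0 < N / d - b ^ 2 := sub_pos.mpr ((lt_div_iff₀' hd).mpr hN)
    refine ⟨√(N / d - b ^ 2), Real.sqrt_pos.mpr hpos, ?_⟩
    simp only [Real.sq_sqrt hpos.le, add_sub_cancel, mul_div_cancel₀ N hd.ne']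

/-- The central charge `Z_{(b,w)}(r, c, s)`, with `d` standing for the paper's `d'`. -/
def centralCharge (d b w r c s : ℝ) : ℂ :=
  ⟨2 * d * b * c - s - d * r * (b ^ 2 - w ^ 2), 2 * d * w * (c - r * b)⟩

/-- The point `k(b, w)` of the plane that represents the stability condition with central charge
`Z_{(b,w)}`. -/
noncomputable def kPoint (d b w : ℝ) : ℝ × ℝ :=
  (b / (d * (b ^ 2 + w ^ 2)), 1 / (d * (b ^ 2 + w ^ 2)))

/-- The set `I_δ` for `δ = (r, c, s)`: the points `k(b, w)` with `Z_{(b,w)}(δ) ∈ ℝ_{≤0}`. -/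
def nonposLocus (d r c s : ℝ) : Set (ℝ × ℝ) :=
  {q | ∃ b w : ℝ, 0 < w ∧ (centralCharge d b w r c s).im = 0 ∧
    (centralCharge d b w r c s).re ≤ 0 ∧ q = kPoint d b w}

theorem kPoint_eq_smul (d b w : ℝ) : kPoint d b w = (d * (b ^ 2 + w ^ 2))⁻¹ • (b, 1) := by
  simp only [kPoint, Prod.smul_mk, smul_eq_mul, mul_one, div_eq_inv_mul]

section CentralCharge

variable {d b w r c s : ℝ}

theorem centralCharge_im_eq_zero_iff (hd : d ≠ 0) (hw : w ≠ 0) (hr : r ≠ 0) :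
    (centralCharge d b w r c s).im = 0 ↔ b = c / r := by
  have hdw : 2 * d * w ≠ 0 := mul_ne_zero (mul_ne_zero two_ne_zero hd) hw
  rw [centralCharge, mul_eq_zero_iff_left hdw, sub_eq_zero, eq_div_iff hr, mul_comm b, eq_comm]

theorem centralCharge_re_of_eq_div (hr : r ≠ 0) (hb : b = c / r) :
    (centralCharge d b w r c s).re = r * (d * (b ^ 2 + w ^ 2)) - s := by
  obtain rfl : b * r = c := (eq_div_iff hr).mp hb
  simp only [centralCharge]
  ring

theorem centralCharge_nonpos_iff (hd : d ≠ 0) (hw : w ≠ 0) (hr : 0 < r) :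
    (centralCharge d b w r c s).im = 0 ∧ (centralCharge d b w r c s).re ≤ 0 ↔
      b = c / r ∧ d * (b ^ 2 + w ^ 2) ≤ s / r := by
  rw [centralCharge_im_eq_zero_iff hd hw hr.ne']
  refine and_congr_right fun hb ↦ ?_
  rw [centralCharge_re_of_eq_div hr.ne' hb, sub_nonpos, le_div_iff₀' hr]

theorem nonposLocus_eq_image_kPoint (hd : d ≠ 0) (hr : 0 < r) :
    nonposLocus d r c s =
      kPoint d (c / r) '' (Ioi 0 ∩ (fun w ↦ d * ((c / r) ^ 2 + w ^ 2)) ⁻¹' Iic (s / r)) := by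
  ext q
  constructor
  · rintro ⟨b, w, hw, him, hre, rfl⟩
    obtain ⟨rfl, hN⟩ := (centralCharge_nonpos_iff hd hw.ne' hr).mp ⟨him, hre⟩
    exact ⟨w, ⟨hw, hN⟩, rfl⟩
  · rintro ⟨w, ⟨hw : 0 < w, hN⟩, rfl⟩
    obtain ⟨him, hre⟩ := (centralCharge_nonpos_iff hd hw.ne' hr).mpr ⟨rfl, hN⟩
    exact ⟨c / r, w, hw, him, hre, rfl⟩

end CentralCharge

theorem image_kPoint {d b m : ℝ} (hd : 0 < d) (hb : b ≠ 0) (hm : 0 < m) :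
    kPoint d b '' (Ioi 0 ∩ (fun w ↦ d * (b ^ 2 + w ^ 2)) ⁻¹' Iic m) =
      (fun y : ℝ ↦ y • (b, (1 : ℝ))) '' Ico m⁻¹ (d * b ^ 2)⁻¹ := by
  have hdb : 0 < d * b ^ 2 := by positivity
  have hk : kPoint d b = (fun y : ℝ ↦ y • (b, (1 : ℝ))) ∘ (fun N ↦ N⁻¹) ∘
      fun w ↦ d * (b ^ 2 + w ^ 2) := funext (kPoint_eq_smul d b)
  rw [hk, image_comp, image_comp, image_inter_preimage, image_mul_sq_add_sq_Ioi hd, Ioi_inter_Iic,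
    image_inv_Ioc₀ hdb hm]

theorem stmt2_general {d r c s : ℝ} (hd : 0 < d) (hr : 0 < r) (hc : c ≠ 0)
    (hdisc : d * c ^ 2 < r * s) :
    nonposLocus d r c s =
      halfOpenSegment ℝ (c / s, r / s) (r / (d * c), r ^ 2 / (d * c ^ 2)) := by
  have hs : 0 < s := pos_of_mul_pos_right ((by positivity : 0 < d * c ^ 2).trans hdisc) hr.le
  have hlt : d * (c / r) ^ 2 < s / r := by
    rw [lt_div_iff₀' hr]
    calc r * (d * (c / r) ^ 2) = d * c ^ 2 / r := by field_simp
      _ < s := (div_lt_iff₀' hr).mpr hdisc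
  have hPr : (s / r)⁻¹ • (c / r, (1 : ℝ)) = (c / s, r / s) := by
    rw [Prod.smul_mk, smul_eq_mul, smul_eq_mul, Prod.mk.injEq]
    constructor <;> field_simp
  have hpt : (d * (c / r) ^ 2)⁻¹ • (c / r, (1 : ℝ)) = (r / (d * c), r ^ 2 / (d * c ^ 2)) := by
    rw [Prod.smul_mk, smul_eq_mul, smul_eq_mul, Prod.mk.injEq]
    constructor <;> field_simp
  rw [nonposLocus_eq_image_kPoint hd.ne' hr,
    image_kPoint hd (div_ne_zero hc hr.ne') (div_pos hs hr),
    image_smul_Ico (inv_strictAnti₀ (by positivity) hlt), hPr, hpt]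

/-- Lemma 2.3 of the paper: for a vector `δ = (r, c, s)` with `r, c, s > 0` and
`d'c² < rs`, the locus of points `k(b,w)` where the central charge `Z_{(b,w)}(δ)` lies in
`ℝ_{≤0}` is the half-open line segment between `Pr(δ) = (c/s, r/s)` and the point
`pt_δ = (r/(d'c), r²/(d'c²))` on the parabola `y = d'x²`. -/
theorem stmt2 (d' r c s : ℝ) (hd' : 0 < d') (hr : 0 < r) (hc : 0 < c) (hs : 0 < s)
    (hdisc : d' * c ^ 2 < r * s) :
    {q : ℝ × ℝ | ∃ b w : ℝ, 0 < w ∧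
        2 * d' * w * (c - r * b) = 0 ∧
        2 * d' * b * c - s - d' * r * (b ^ 2 - w ^ 2) ≤ 0 ∧
        q = (b / (d' * (b ^ 2 + w ^ 2)), 1 / (d' * (b ^ 2 + w ^ 2)))} =
    {q : ℝ × ℝ | ∃ t : ℝ, 0 ≤ t ∧ t < 1 ∧
        q = (1 - t) • ((c / s, r / s) : ℝ × ℝ) +
            t • ((r / (d' * c), r ^ 2 / (d' * c ^ 2)) : ℝ × ℝ)} :=
  stmt2_general hd' hr hc.ne' hdisc
end

section
/- Fix a real number d' > 0 and real numbers r, c, s, b with r ≠ 0. Define q(b) = −d'b² + d'b(2c − r)/r + d'c/r − 2d'c²/r² + s/r, and suppose q(b) > 0; set w = √(q(b)/d'). If moreover s ≠ 0 and s − 2d'c + d'r ≠ 0, then the three points k(b, w), (c/s, r/s), and ((c − r)/(s − 2d'c + d'r), r/(s − 2d'c + d'r)) in ℝ² are collinear. (Computational content of Lemma 3.1: if F has normalized Mukai vector (r, c, s), then F(−H) has normalized Mukai vector (r, c − r, s − 2d'c + d'r), and the stability condition σ_{(b,w_b)} with d'w_b² = q(b) lies on the line through Pr(F) and Pr(F(−H)),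 so that F and F(−H)[1] have the same phase there.) -/
/-!
Both `Pr` and `k` are central projections: writing a Mukai vector as `((c, r), s)`, one divides the
first two coordinates by the third, and `k(b, w)` is the image of `((b, 1), d'(b² + w²))`, which
spans the kernel of the central charge `Z_{b,w}`. Linearly dependent vectors project to collinear
points, so it suffices that the kernel vector is a linear combination of the Mukai vectors of `F`
and `F(-H)`. Its first two coordinates determine the coefficients, and comparing third coordinates
then gives exactly `d'w² = q(b)`.
-/

section Dehomogenize

variable {K V : Type*} [AddCommGroup V]

/-- The central projection `V × K → V`, `(v, t) ↦ t⁻¹ • v`, onto the affine chart `t = 1` of the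
projective space of `V × K`. On the hyperplane `t = 0` it takes the junk value `0`. It encodes `Pr`,
with the Mukai vector `(r, c, s)` written as `((c, r), s)`. -/
def dehomogenize [DivisionRing K] [Module K V] (x : V × K) : V :=
  x.2⁻¹ • x.1

theorem dehomogenize_mk_prod [Field K] (a b t : K) :
    dehomogenize ((a, b), t) = (a / t, b / t) := by
  simp only [dehomogenize, Prod.smul_mk, smul_eq_mul, inv_mul_eq_div]

theorem dehomogenize_mem_affineSpan_pair [DivisionRing K] [Module K V] {x y z : V × K}
    (hx : x.2 ≠ 0) (hy : y.2 ≠ 0) (hz : z.2 ≠ 0) (hmem : x ∈ Submodule.span K {y, z}) :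
    dehomogenize x ∈ line[K, dehomogenize y, dehomogenize z] := by
  obtain ⟨α, β, rfl⟩ := Submodule.mem_span_pair.1 hmem
  set t := (α • y + β • z).2
  have ht_add : α * y.2 + β * z.2 = t := rfl
  have weights_add : t⁻¹ * (α * y.2) + t⁻¹ * (β * z.2) = 1 := by
    rw [← mul_add, ht_add, inv_mul_cancel₀ hx]
  have smul_dehomogenize (γ : K) {u : V × K} (hu : u.2 ≠ 0) :
      (t⁻¹ * (γ * u.2)) • dehomogenize u = t⁻¹ • γ • u.1 := by
    rw [dehomogenize, smul_smul, mul_assoc, mul_inv_cancel_right₀ hu, mul_smul]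
  have eq_lineMap : dehomogenize (α • y + β • z) =
      AffineMap.lineMap (dehomogenize y) (dehomogenize z) (t⁻¹ * (β * z.2)) := by
    rw [AffineMap.lineMap_apply_module, ← eq_sub_of_add_eq weights_add,
      smul_dehomogenize α hy, smul_dehomogenize β hz, ← smul_add]
    rfl
  exact eq_lineMap ▸ AffineMap.lineMap_mem_affineSpan_pair _ _ _

end Dehomogenize

section Mukai

variable {K : Type*} [Field K] {d' r c s b w : K}

/-- The polynomial `q(b)` attached to the Mukai vector `(r, c, s)` of `F`: the values of
`Z_{b,w}` on `F` and `F(-H)` are proportional over `ℝ` when `d'w² = q(b)`. -/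
def phaseQuadratic (d' r c s b : K) : K :=
  -d' * b ^ 2 + d' * b * (2 * c - r) / r + d' * c / r - 2 * d' * c ^ 2 / r ^ 2 + s / r

theorem kernelVector_mem_span_pair (hr : r ≠ 0) (hw : d' * w ^ 2 = phaseQuadratic d' r c s b) :
    ((b, 1), d' * (b ^ 2 + w ^ 2)) ∈
      Submodule.span K {((c, r), s), ((c - r, r), s - 2 * d' * c + d' * r)} := by
  refine Submodule.mem_span_pair.2 ⟨(r - c + b * r) / r ^ 2, (c - b * r) / r ^ 2, ?_⟩
  simp only [Prod.smul_mk, Prod.mk_add_mk, smul_eq_mul, Prod.mk.injEq, mul_add d', hw,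
    phaseQuadratic]
  refine ⟨⟨?_, ?_⟩, ?_⟩ <;> field_simp <;> ring

theorem stmt6_general (hr : r ≠ 0) (hw : d' * w ^ 2 = phaseQuadratic d' r c s b)
    (hk : d' * (b ^ 2 + w ^ 2) ≠ 0) (hs : s ≠ 0) (hs' : s - 2 * d' * c + d' * r ≠ 0) :
    Collinear K
      ({(b / (d' * (b ^ 2 + w ^ 2)), 1 / (d' * (b ^ 2 + w ^ 2))),
        (c / s, r / s),
        ((c - r) / (s - 2 * d' * c + d' * r), r / (s - 2 * d' * c + d' * r))} :
        Set (K × K)) := by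
  simp only [← dehomogenize_mk_prod]
  exact collinear_insert_of_mem_affineSpan_pair
    (dehomogenize_mem_affineSpan_pair hk hs hs' (kernelVector_mem_span_pair hr hw))

end Mukai

/-- Computational content of Lemma 3.1: with `w = √(q(b)/d')` where
`q(b) = −d'b² + d'b(2c − r)/r + d'c/r − 2d'c²/r² + s/r > 0`, the point `k(b,w)` lies on
the line through `Pr(F) = (c/s, r/s)` and
`Pr(F(−H)) = ((c−r)/(s−2d'c+d'r), r/(s−2d'c+d'r))`. -/
theorem stmt6 (d' r c s b : ℝ) (hd' : 0 < d') (hr : r ≠ 0)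
    (hq : 0 < -d' * b ^ 2 + d' * b * (2 * c - r) / r + d' * c / r
            - 2 * d' * c ^ 2 / r ^ 2 + s / r)
    (w : ℝ)
    (hw : w = Real.sqrt ((-d' * b ^ 2 + d' * b * (2 * c - r) / r + d' * c / r
            - 2 * d' * c ^ 2 / r ^ 2 + s / r) / d'))
    (hs : s ≠ 0) (hs' : s - 2 * d' * c + d' * r ≠ 0) :
    Collinear ℝ
      ({(b / (d' * (b ^ 2 + w ^ 2)), 1 / (d' * (b ^ 2 + w ^ 2))),
        (c / s, r / s),
        ((c - r) / (s - 2 * d' * c + d' * r), r / (s - 2 * d' * c + d' * r))} :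
        Set (ℝ × ℝ)) := by
  have hw_pos : 0 < w := hw ▸ Real.sqrt_pos.2 (div_pos hq hd')
  have hw_sq : d' * w ^ 2 = phaseQuadratic d' r c s b := by
    rw [hw, Real.sq_sqrt (div_pos hq hd').le, mul_div_cancel₀ _ hd'.ne', phaseQuadratic]
  exact stmt6_general hr hw_sq (by positivity) hs hs'
end
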